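/- Let d ≥ 3, s > d/2 an integer, and φ ∈ H^{s+1}(ℝᵈ). Then for any vector field w ∈ H^{s+1}(ℝᵈ), ‖∇(e^{−φ}w)‖_{H^s} ≤ 𝒞(‖φ‖_{H^{s+1}}) ‖∇w‖_{H^s} for some function 𝒞 independent of w; i.e., multiplication by e^{−φ} is bounded on homogeneous-type gradient norms in H^s. -/

import Mathlib

open MeasureTheory SchwartzMap
open scoped FourierTransform Real

noncomputable section

abbrev Euc (d : ℕ) := EuclideanSpace ℝ (Fin d)

/-- Square of the `H^s` norm via the Fourier transform. -/
def hNormSq (d : ℕ) (s : ℝ) (u : Euc d → ℂ) : ℝ :=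
  ∫ ξ : Euc d, (1 + ‖ξ‖ ^ 2) ^ s * ‖𝓕 u ξ‖ ^ 2

def hNorm (d : ℕ) (s : ℝ) (u : Euc d → ℂ) : ℝ := Real.sqrt (hNormSq d s u)

/-- `i`-th partial derivative. -/
def pd (d : ℕ) (i : Fin d) (u : Euc d → ℂ) : Euc d → ℂ :=
  fun x => fderiv ℝ u x (EuclideanSpace.single i 1)

/-- `H^s` norm of the full gradient of a scalar function. -/
def gradHNorm (d : ℕ) (s : ℝ) (u : Euc d → ℂ) : ℝ :=
  Real.sqrt (∑ i, hNormSq d s (pd d i u))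

/-!
On the Fourier side `‖∇u‖_{H^s}` is the weighted norm `‖m 𝓕u‖_{L²}` with `m(ξ) = ⟨ξ⟩ˢ |ξ|`, up to
a factor `2π`. For `s ≥ 0` the weight is quasi-subadditive, `m(ξ + η) ≲ m(ξ) + m(η)`, and `m⁻¹` is
square integrable: at infinity because `s + 1 > d / 2`, at the origin because `d ≥ 3`. Hence
`‖𝓕u‖_{L¹} ≤ ‖m⁻¹‖_{L²} ‖m 𝓕u‖_{L²}`, and Young's inequality `L¹ * L² ⊆ L²` applied to
`𝓕(uv) = 𝓕u * 𝓕v` gives `‖∇(uv)‖_{H^s} ≤ A ‖∇u‖_{H^s} ‖∇v‖_{H^s}`. Iterating this bound along the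
power series of the exponential yields `‖∇(e^u v)‖_{H^s} ≤ exp (A ‖∇u‖_{H^s}) ‖∇v‖_{H^s}`, with no
lower-order norm of `v` on the right.
-/

open scoped ENNReal NNReal

section LConvolution

variable {G : Type*} [AddGroup G] [MeasurableSpace G] [MeasurableAdd₂ G] [MeasurableNeg G]
  {μ : Measure G}

lemma lintegral_lconvolution [SFinite μ] [μ.IsAddLeftInvariant] {a b : G → ℝ≥0∞}
    (ha : Measurable a) (hb : Measurable b) :
    ∫⁻ x, (a ⋆ₗ[μ] b) x ∂μ = (∫⁻ x, a x ∂μ) * ∫⁻ x, b x ∂μ := by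
  simp only [lconvolution_def]
  rw [lintegral_lintegral_swap (by fun_prop), ← lintegral_mul_const _ ha]
  refine lintegral_congr fun y => ?_
  rw [lintegral_const_mul _ (by fun_prop), lintegral_add_left_eq_self b]

lemma lconvolution_rpow_le {p : ℝ} (hp : 1 ≤ p) {a b : G → ℝ≥0∞}
    (ha : Measurable a) (hb : Measurable b) (x : G) :
    (a ⋆ₗ[μ] b) x ^ p ≤ (∫⁻ y, a y ∂μ) ^ (p - 1) * (a ⋆ₗ[μ] fun y => b y ^ p) x := by
  have hp₀ : 0 < p := one_pos.trans_le hp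
  have hpinv : 0 ≤ 1 - p⁻¹ := sub_nonneg.2 (inv_le_one_of_one_le₀ hp)
  have split (y : G) : a y * b (-y + x) = a y ^ (1 - p⁻¹) * (a y * b (-y + x) ^ p) ^ p⁻¹ := by
    rw [ENNReal.mul_rpow_of_nonneg _ _ (inv_nonneg.2 hp₀.le), ENNReal.rpow_rpow_inv hp₀.ne',
      ← mul_assoc, ← ENNReal.rpow_add_of_nonneg _ _ hpinv (inv_nonneg.2 hp₀.le),
      sub_add_cancel, ENNReal.rpow_one]
  have hölder := ENNReal.lintegral_mul_norm_pow_le (μ := μ) (f := a)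
    (g := fun y => a y * b (-y + x) ^ p) (by fun_prop) (by fun_prop) hpinv
    (inv_nonneg.2 hp₀.le) (sub_add_cancel _ _)
  simp only [← split] at hölder
  calc (a ⋆ₗ[μ] b) x ^ p
      ≤ ((∫⁻ y, a y ∂μ) ^ (1 - p⁻¹) * (∫⁻ y, a y * b (-y + x) ^ p ∂μ) ^ p⁻¹) ^ p := by
        gcongr
        exact hölder
    _ = (∫⁻ y, a y ∂μ) ^ (p - 1) * (a ⋆ₗ[μ] fun y => b y ^ p) x := by
        rw [ENNReal.mul_rpow_of_nonneg _ _ hp₀.le, ENNReal.rpow_inv_rpow hp₀.ne',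
          ← ENNReal.rpow_mul, sub_mul, one_mul, inv_mul_cancel₀ hp₀.ne', lconvolution_def]

theorem eLpNorm_lconvolution_le [SFinite μ] [μ.IsAddLeftInvariant] {p : ℝ≥0∞}
    (hp : 1 ≤ p) (hp' : p ≠ ∞) {a b : G → ℝ≥0∞} (ha : Measurable a) (hb : Measurable b) :
    eLpNorm (a ⋆ₗ[μ] b) p μ ≤ (∫⁻ x, a x ∂μ) * eLpNorm b p μ := by
  have hp₀ : p ≠ 0 := (one_pos.trans_le hp).ne'
  have hp₁ : 1 ≤ p.toReal := by simpa using ENNReal.toReal_mono hp' hp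
  have hp₂ : 0 < p.toReal := one_pos.trans_le hp₁
  simp only [eLpNorm_eq_lintegral_rpow_enorm_toReal hp₀ hp', enorm_eq_self, one_div]
  rw [ENNReal.rpow_inv_le_iff hp₂, ENNReal.mul_rpow_of_nonneg _ _ hp₂.le,
    ENNReal.rpow_inv_rpow hp₂.ne']
  calc ∫⁻ x, (a ⋆ₗ[μ] b) x ^ p.toReal ∂μ
      ≤ ∫⁻ x, (∫⁻ y, a y ∂μ) ^ (p.toReal - 1) * (a ⋆ₗ[μ] fun y => b y ^ p.toReal) x ∂μ :=
        lintegral_mono (lconvolution_rpow_le hp₁ ha hb)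
    _ = (∫⁻ y, a y ∂μ) ^ p.toReal * ∫⁻ x, b x ^ p.toReal ∂μ := by
        rw [lintegral_const_mul _ (by fun_prop),
          lintegral_lconvolution ha (by fun_prop), ← mul_assoc]
        nth_rw 2 [← ENNReal.rpow_one (∫⁻ y, a y ∂μ)]
        rw [← ENNReal.rpow_add_of_nonneg _ _ (sub_nonneg.2 hp₁) one_pos.le, sub_add_cancel]

lemma mul_lconvolution_le {m a b : G → ℝ≥0∞} {C : ℝ≥0∞}
    (hm : Measurable m) (hma : ∀ x y, m (x + y) ≤ C * (m x + m y))
    (ha : Measurable a) (hb : Measurable b) (x : G) :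
    m x * (a ⋆ₗ[μ] b) x
      ≤ C * (((m * a) ⋆ₗ[μ] b) x + (a ⋆ₗ[μ] (m * b)) x) := by
  simp only [lconvolution_def, Pi.mul_apply]
  rw [← lintegral_add_left (by fun_prop), ← lintegral_const_mul _ (by fun_prop),
    ← lintegral_const_mul _ (by fun_prop)]
  refine lintegral_mono fun y => ?_
  have hmx : m x ≤ C * (m y + m (-y + x)) := by simpa using hma y (-y + x)
  calc m x * (a y * b (-y + x)) ≤ C * (m y + m (-y + x)) * (a y * b (-y + x)) := by gcongr
    _ = C * (m y * a y * b (-y + x) + a y * (m (-y + x) * b (-y + x))) := by ring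

end LConvolution

lemma lintegral_le_eLpNorm_inv_mul_eLpNorm_mul {α : Type*} [MeasurableSpace α] {μ : Measure α}
    {m a : α → ℝ≥0∞} (hm : Measurable m) (hm₀ : ∀ᵐ x ∂μ, m x ≠ 0) (hm' : ∀ᵐ x ∂μ, m x ≠ ∞)
    (ha : Measurable a) :
    ∫⁻ x, a x ∂μ ≤ eLpNorm m⁻¹ 2 μ * eLpNorm (m * a) 2 μ := by
  calc ∫⁻ x, a x ∂μ = ∫⁻ x, (m⁻¹ * (m * a)) x ∂μ := by
        refine lintegral_congr_ae ?_
        filter_upwards [hm₀, hm'] with x h₀ h'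
        simp [← mul_assoc, ENNReal.inv_mul_cancel h₀ h']
    _ ≤ eLpNorm m⁻¹ 2 μ * eLpNorm (m * a) 2 μ := by
        simpa [eLpNorm_eq_lintegral_rpow_enorm_toReal] using
          ENNReal.lintegral_mul_le_Lp_mul_Lq μ Real.HolderConjugate.two_two
            hm.inv.aemeasurable (hm.mul ha).aemeasurable

theorem eLpNorm_mul_lconvolution_le {G : Type*} [AddCommGroup G] [MeasurableSpace G]
    [MeasurableAdd₂ G] [MeasurableNeg G] {μ : Measure G} [SFinite μ] [μ.IsAddLeftInvariant]
    [μ.IsNegInvariant] {m a b : G → ℝ≥0∞} {C : ℝ≥0}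
    (hm : Measurable m) (hm₀ : ∀ᵐ x ∂μ, m x ≠ 0) (hm' : ∀ᵐ x ∂μ, m x ≠ ∞)
    (hma : ∀ x y, m (x + y) ≤ C * (m x + m y)) (ha : Measurable a) (hb : Measurable b) :
    eLpNorm (m * (a ⋆ₗ[μ] b)) 2 μ
      ≤ C * (2 * eLpNorm m⁻¹ 2 μ) * eLpNorm (m * a) 2 μ * eLpNorm (m * b) 2 μ := by
  have bound₁ : eLpNorm ((m * a) ⋆ₗ[μ] b) 2 μ
      ≤ eLpNorm m⁻¹ 2 μ * eLpNorm (m * b) 2 μ * eLpNorm (m * a) 2 μ := by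
    rw [lconvolution_comm]
    exact (eLpNorm_lconvolution_le one_le_two ENNReal.ofNat_ne_top hb (hm.mul ha)).trans
      (mul_le_mul_left (lintegral_le_eLpNorm_inv_mul_eLpNorm_mul hm hm₀ hm' hb) _)
  have bound₂ : eLpNorm (a ⋆ₗ[μ] (m * b)) 2 μ
      ≤ eLpNorm m⁻¹ 2 μ * eLpNorm (m * a) 2 μ * eLpNorm (m * b) 2 μ :=
    (eLpNorm_lconvolution_le one_le_two ENNReal.ofNat_ne_top ha (hm.mul hb)).trans
      (mul_le_mul_left (lintegral_le_eLpNorm_inv_mul_eLpNorm_mul hm hm₀ hm' ha) _)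
  calc eLpNorm (m * (a ⋆ₗ[μ] b)) 2 μ
      ≤ C * eLpNorm ((m * a) ⋆ₗ[μ] b + a ⋆ₗ[μ] (m * b)) 2 μ :=
        eLpNorm_le_nnreal_smul_eLpNorm_of_ae_le_mul'
          (.of_forall fun x => mul_lconvolution_le hm hma ha hb x) 2
    _ ≤ C * (eLpNorm m⁻¹ 2 μ * eLpNorm (m * b) 2 μ * eLpNorm (m * a) 2 μ
          + eLpNorm m⁻¹ 2 μ * eLpNorm (m * a) 2 μ * eLpNorm (m * b) 2 μ) := by
        gcongr
        refine (eLpNorm_add_le (Measurable.aestronglyMeasurable (by fun_prop))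
          (Measurable.aestronglyMeasurable (by fun_prop)) one_le_two).trans ?_
        gcongr
    _ = C * (2 * eLpNorm m⁻¹ 2 μ) * eLpNorm (m * a) 2 μ * eLpNorm (m * b) 2 μ := by ring

lemma eLpNorm_le_tsum_of_hasSum {α F : Type*} [MeasurableSpace α] {μ : Measure α}
    [NormedAddCommGroup F] {p : ℝ≥0∞} (hp : 1 ≤ p) {f : ℕ → α → F} {g : α → F}
    (hf : ∀ n, AEStronglyMeasurable (f n) μ) (hg : ∀ᵐ x ∂μ, HasSum (fun n => f n x) (g x)) :
    eLpNorm g p μ ≤ ∑' n, eLpNorm (f n) p μ := by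
  refine (Lp.eLpNorm_lim_le_liminf_eLpNorm
    (f := fun N => ∑ n ∈ Finset.range N, f n) (fun N => Finset.aestronglyMeasurable_sum _
      fun n _ => hf n) g ?_).trans ?_
  · filter_upwards [hg] with x hx
    simpa only [Finset.sum_apply] using hx.tendsto_sum_nat
  · refine Filter.liminf_le_of_le (by isBoundedDefault) fun b hb => ?_
    obtain ⟨N, hN⟩ := hb.exists
    exact hN.trans ((eLpNorm_sum_le (fun n _ => hf n) hp).trans (ENNReal.sum_le_tsum _))

open scoped Nat in
lemma tsum_inv_factorial_mul_pow {x : ℝ≥0∞} (hx : x ≠ ∞) :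
    ∑' n : ℕ, (n ! : ℝ≥0∞)⁻¹ * x ^ n = ENNReal.ofReal (Real.exp x.toReal) := by
  have hexp := NormedSpace.expSeries_div_hasSum_exp x.toReal
  rw [Real.exp_eq_exp_ℝ, ← hexp.tsum_eq,
    ENNReal.ofReal_tsum_of_nonneg (fun n => by positivity) hexp.summable]
  refine tsum_congr fun n => ?_
  rw [ENNReal.ofReal_div_of_pos (by positivity), ENNReal.ofReal_pow ENNReal.toReal_nonneg,
    ENNReal.ofReal_toReal hx, ENNReal.ofReal_natCast, ENNReal.div_eq_inv_mul]

lemma rpow_div_two_sq {x : ℝ} (hx : 0 ≤ x) (s : ℝ) : (x ^ (s / 2)) ^ 2 = x ^ s := by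
  rw [← Real.rpow_mul_natCast hx, Nat.cast_ofNat, div_mul_cancel₀ s two_ne_zero]

section GradWeight

variable {E : Type*} [NormedAddCommGroup E]

/-- The Fourier multiplier `⟨ξ⟩ ^ s * |ξ|`, where `⟨ξ⟩ = (1 + |ξ| ^ 2) ^ (1 / 2)`: up to a factor
`2 * π`, the `L²` norm of `gradWeight s • 𝓕 u` is the `H^s` norm of `∇u`. -/
def gradWeight (s : ℝ) (ξ : E) : ℝ := (1 + ‖ξ‖ ^ 2) ^ (s / 2) * ‖ξ‖

lemma gradWeight_nonneg (s : ℝ) (ξ : E) : 0 ≤ gradWeight s ξ := by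
  unfold gradWeight; positivity

lemma gradWeight_ne_zero (s : ℝ) {ξ : E} (hξ : ξ ≠ 0) : gradWeight s ξ ≠ 0 := by
  unfold gradWeight; positivity

@[fun_prop]
lemma continuous_gradWeight (s : ℝ) : Continuous (gradWeight (E := E) s) := by
  unfold gradWeight
  exact ((by fun_prop : Continuous fun ξ : E => 1 + ‖ξ‖ ^ 2).rpow_const
    fun ξ => .inl (by positivity)).mul continuous_norm

lemma gradWeight_sq (s : ℝ) (ξ : E) : gradWeight s ξ ^ 2 = (1 + ‖ξ‖ ^ 2) ^ s * ‖ξ‖ ^ 2 := by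
  rw [gradWeight, mul_pow, rpow_div_two_sq (by positivity)]

lemma gradWeight_le_one_add_norm_sq_rpow (s : ℝ) (ξ : E) :
    gradWeight s ξ ≤ (1 + ‖ξ‖ ^ 2) ^ ((s + 1) / 2) := by
  rw [gradWeight, add_div, Real.rpow_add (by positivity), ← Real.sqrt_eq_rpow]
  gcongr
  exact Real.le_sqrt_of_sq_le (by linarith)

lemma gradWeight_le_of_norm_le_two_mul {s : ℝ} (hs : 0 ≤ s) {ξ η : E} (h : ‖ξ‖ ≤ 2 * ‖η‖) :
    gradWeight s ξ ≤ 2 ^ (s + 1) * gradWeight s η := by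
  have bracket_le : 1 + ‖ξ‖ ^ 2 ≤ 2 ^ (2 : ℝ) * (1 + ‖η‖ ^ 2) := by
    norm_num
    nlinarith [norm_nonneg ξ]
  calc gradWeight s ξ ≤ (2 ^ (2 : ℝ) * (1 + ‖η‖ ^ 2)) ^ (s / 2) * (2 * ‖η‖) := by
        unfold gradWeight; gcongr
    _ = 2 ^ (s + 1) * gradWeight s η := by
        rw [gradWeight, Real.mul_rpow (by positivity) (by positivity), ← Real.rpow_mul two_pos.le,
          mul_div_cancel₀ s two_ne_zero, Real.rpow_add_one two_ne_zero]
        ring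

lemma gradWeight_add_le {s : ℝ} (hs : 0 ≤ s) (ξ η : E) :
    gradWeight s (ξ + η) ≤ 2 ^ (s + 1) * (gradWeight s ξ + gradWeight s η) := by
  rw [mul_add]
  have hadd := norm_add_le ξ η
  have hpos (ζ : E) : 0 ≤ 2 ^ (s + 1) * gradWeight s ζ :=
    mul_nonneg (by positivity) (gradWeight_nonneg s ζ)
  rcases le_total ‖ξ‖ ‖η‖ with h | h
  · exact (gradWeight_le_of_norm_le_two_mul hs (by linarith)).trans (le_add_of_nonneg_left (hpos ξ))
  · exact (gradWeight_le_of_norm_le_two_mul hs (by linarith)).trans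
      (le_add_of_nonneg_right (hpos η))

lemma enorm_gradWeight_add_le {s : ℝ} (hs : 0 ≤ s) (ξ η : E) :
    ‖gradWeight s (ξ + η)‖ₑ ≤ (2 ^ (s + 1) : ℝ≥0) * (‖gradWeight s ξ‖ₑ + ‖gradWeight s η‖ₑ) := by
  simp only [enorm_eq_nnnorm]
  norm_cast
  rw [← NNReal.coe_le_coe]
  simpa [abs_of_nonneg, gradWeight_nonneg] using gradWeight_add_le hs ξ η

lemma inv_gradWeight_sq_le_of_nonneg {s : ℝ} (hs : 0 ≤ s) (ξ : E) :
    (gradWeight s ξ ^ 2)⁻¹ ≤ (‖ξ‖ ^ 2)⁻¹ := by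
  rw [gradWeight_sq, mul_inv]
  exact mul_le_of_le_one_left (by positivity)
    (inv_le_one_of_one_le₀ (Real.one_le_rpow (le_add_of_nonneg_right (by positivity)) hs))

lemma inv_gradWeight_sq_le_of_one_le_norm (s : ℝ) {ξ : E} (hξ : 1 ≤ ‖ξ‖) :
    (gradWeight s ξ ^ 2)⁻¹ ≤ 2 * (1 + ‖ξ‖ ^ 2) ^ (-(s + 1)) := by
  have : 0 < ‖ξ‖ := one_pos.trans_le hξ
  rw [gradWeight_sq, Real.rpow_neg (by positivity), Real.rpow_add_one (by positivity),
    ← div_eq_mul_inv, inv_le_comm₀ (by positivity) (by positivity), inv_div, div_le_iff₀ two_pos,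
    mul_assoc]
  gcongr
  nlinarith

variable [NormedSpace ℝ E] [FiniteDimensional ℝ E] [MeasurableSpace E] [BorelSpace E]
  (μ : Measure E) [μ.IsAddHaarMeasure]

lemma ae_gradWeight_ne_zero [Nontrivial E] (s : ℝ) : ∀ᵐ ξ ∂μ, gradWeight s ξ ≠ 0 := by
  filter_upwards [compl_mem_ae_iff.2 (measure_singleton (0 : E))] with ξ hξ
  exact gradWeight_ne_zero s hξ

lemma memLp_two_inv_gradWeight {s : ℝ} (hE : 3 ≤ Module.finrank ℝ E)
    (hs : (Module.finrank ℝ E : ℝ) / 2 < s + 1) :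
    MemLp (gradWeight s)⁻¹ 2 μ := by
  have hE' : (3 : ℝ) ≤ Module.finrank ℝ E := by exact_mod_cast hE
  have hmeas := (continuous_gradWeight (E := E) s).measurable
  have hmeas_sq : AEStronglyMeasurable (fun ξ : E => (gradWeight s ξ ^ 2)⁻¹) μ :=
    (hmeas.pow_const 2).inv.aestronglyMeasurable
  rw [memLp_two_iff_integrable_sq hmeas.inv.aestronglyMeasurable, ← integrableOn_univ,
    ← Set.union_compl_self (Metric.ball (0 : E) 1)]
  simp only [Pi.inv_apply, inv_pow]
  refine IntegrableOn.union ?_ ?_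
  · refine integrableOn_ball_of_norm_le_rpow (C := 1) (α := 2) (by omega) (by linarith)
      (.of_forall fun ξ => ?_) hmeas_sq
    rw [Real.norm_of_nonneg (by positivity), one_mul, Real.rpow_neg (norm_nonneg _), Real.rpow_two]
    exact inv_gradWeight_sq_le_of_nonneg (by linarith) ξ
  · have hdecay : Integrable (fun ξ : E => 2 * (1 + ‖ξ‖ ^ 2) ^ (-(s + 1))) μ := by
      convert! (integrable_rpow_neg_one_add_norm_sq (μ := μ) (r := 2 * (s + 1))
        (by linarith)).const_mul 2 using 4
      ring
    refine hdecay.integrableOn.mono' hmeas_sq.restrict ?_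
    filter_upwards [ae_restrict_mem measurableSet_ball.compl] with ξ hξ
    rw [Real.norm_of_nonneg (by positivity)]
    exact inv_gradWeight_sq_le_of_one_le_norm s (by simpa using hξ)

end GradWeight

open scoped Convolution in
lemma enorm_convolution_mul_le {G : Type*} [AddCommGroup G] [MeasurableSpace G] {μ : Measure G}
    (a b : G → ℂ) (x : G) :
    ‖(a ⋆[ContinuousLinearMap.mul ℂ ℂ, μ] b) x‖ₑ
      ≤ ((fun y => ‖a y‖ₑ) ⋆ₗ[μ] fun y => ‖b y‖ₑ) x := by
  rw [convolution_def, lconvolution_def]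
  refine (enorm_integral_le_lintegral_enorm _).trans_eq (lintegral_congr fun y => ?_)
  rw [ContinuousLinearMap.mul_apply', enorm_mul, neg_add_eq_sub]

lemma coe_pairing_mul_pow {E : Type*} [NormedAddCommGroup E] [NormedSpace ℝ E]
    (f g : 𝓢(E, ℂ)) (n : ℕ) :
    ⇑((pairing (ContinuousLinearMap.mul ℂ ℂ) f ^ n) g) = fun x => f x ^ n * g x := by
  induction n with
  | zero => simp
  | succ n ih =>
    ext x
    rw [pow_succ', mul_apply_eq_comp, pairing_apply_apply, ih,
      ContinuousLinearMap.mul_apply', pow_succ', mul_assoc]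

section GradENorm

open scoped Convolution

variable {E : Type*} [NormedAddCommGroup E] [InnerProductSpace ℝ E] [FiniteDimensional ℝ E]
  [MeasurableSpace E] [BorelSpace E]

lemma fourier_mul_eq_convolution (f g : 𝓢(E, ℂ)) :
    𝓕 (fun x => f x * g x) = 𝓕 (f : E → ℂ) ⋆[ContinuousLinearMap.mul ℂ ℂ] 𝓕 (g : E → ℂ) := by
  ext ξ
  have fourier_eq (h : 𝓢(E, ℂ)) (x : E) : 𝓕 (h : E → ℂ) x = 𝓕⁻ h (-x) := by
    rw [SchwartzMap.fourierInv_coe, Real.fourierInv_eq_fourier_neg, neg_neg]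
  have hconv := SchwartzMap.convolution_apply (ContinuousLinearMap.mul ℂ ℂ) (𝓕⁻ f) (𝓕⁻ g) (-ξ)
  have hinv : SchwartzMap.convolution (ContinuousLinearMap.mul ℂ ℂ) (𝓕⁻ f) (𝓕⁻ g)
      = 𝓕⁻ (pairing (ContinuousLinearMap.mul ℂ ℂ) f g) := by
    simp [SchwartzMap.convolution]
  rw [hinv, ← fourier_eq] at hconv
  change 𝓕 (pairing (ContinuousLinearMap.mul ℂ ℂ) f g : E → ℂ) ξ = _
  rw [hconv, convolution_def, convolution_def, ← integral_neg_eq_self]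
  simp only [fourier_eq, neg_sub, sub_neg_eq_add, neg_add_eq_sub]

lemma continuous_fourier {u : E → ℂ} (hu : Integrable u) : Continuous (𝓕 u) :=
  VectorFourier.fourierIntegral_continuous Real.continuous_fourierChar
    (by exact continuous_inner) hu

/-- The seminorm `‖∇u‖_{H^s}` up to a factor `2 * π`, on the Fourier side and with values in
`ℝ≥0∞`, so that it makes sense before `∇u ∈ H^s` is known. -/
def gradENorm (s : ℝ) (u : E → ℂ) : ℝ≥0∞ := eLpNorm (fun ξ => gradWeight s ξ • 𝓕 u ξ) 2 volume

lemma gradENorm_eq_eLpNorm_enorm (s : ℝ) (u : E → ℂ) :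
    gradENorm s u = eLpNorm ((fun ξ => ‖gradWeight s ξ‖ₑ) * fun ξ => ‖𝓕 u ξ‖ₑ) 2 volume :=
  eLpNorm_congr_enorm_ae (.of_forall fun ξ => by
    simp only [Pi.mul_apply, enorm_smul, enorm_eq_self])

lemma gradENorm_const_mul (s : ℝ) (c : ℂ) (u : E → ℂ) :
    gradENorm s (fun x => c * u x) = ‖c‖ₑ * gradENorm s u := by
  have hfourier (ξ : E) : 𝓕 (fun x => c * u x) ξ = c * 𝓕 u ξ := by
    exact congrFun (VectorFourier.fourierIntegral_const_smul Real.fourierChar volume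
      (innerₗ E) u c) ξ
  rw [gradENorm, gradENorm, ← eLpNorm_const_smul]
  congr 1 with ξ
  rw [hfourier, Pi.smul_apply, smul_eq_mul, mul_smul_comm]

variable (E) in
/-- The constant in the algebra inequality `gradENorm_mul_le`. -/
def gradAlgebraConst (s : ℝ) : ℝ≥0∞ :=
  (2 ^ (s + 1) : ℝ≥0) * (2 * eLpNorm (gradWeight (E := E) s)⁻¹ 2 volume)

lemma gradAlgebraConst_ne_top {s : ℝ} (hE : 3 ≤ Module.finrank ℝ E)
    (hs : (Module.finrank ℝ E : ℝ) / 2 < s + 1) : gradAlgebraConst E s ≠ ∞ :=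
  ENNReal.mul_ne_top ENNReal.coe_ne_top <|
    ENNReal.mul_ne_top ENNReal.ofNat_ne_top (memLp_two_inv_gradWeight volume hE hs).eLpNorm_ne_top

lemma eLpNorm_inv_enorm_gradWeight [Nontrivial E] (s : ℝ) :
    eLpNorm (fun ξ : E => ‖gradWeight s ξ‖ₑ)⁻¹ 2 volume
      = eLpNorm (gradWeight (E := E) s)⁻¹ 2 volume := by
  refine eLpNorm_congr_enorm_ae ?_
  filter_upwards [ae_gradWeight_ne_zero volume s] with ξ hξ
  simp [enorm_inv hξ]

theorem gradENorm_mul_le [Nontrivial E] {s : ℝ} (hs : 0 ≤ s) (f g : 𝓢(E, ℂ)) :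
    gradENorm s (fun x => f x * g x) ≤ gradAlgebraConst E s * gradENorm s f * gradENorm s g := by
  have hm : Measurable fun ξ : E => ‖gradWeight s ξ‖ₑ := by fun_prop
  have hF (h : 𝓢(E, ℂ)) : Measurable fun ξ => ‖𝓕 (h : E → ℂ) ξ‖ₑ :=
    (continuous_fourier h.integrable).measurable.enorm
  have hm₀ : ∀ᵐ ξ : E, ‖gradWeight s ξ‖ₑ ≠ 0 := by
    simpa using ae_gradWeight_ne_zero volume s
  simp only [gradENorm_eq_eLpNorm_enorm, gradAlgebraConst, ← eLpNorm_inv_enorm_gradWeight,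
    fourier_mul_eq_convolution]
  refine le_trans (eLpNorm_mono_enorm fun ξ => ?_) <|
    eLpNorm_mul_lconvolution_le hm hm₀ (.of_forall fun _ => enorm_ne_top)
      (enorm_gradWeight_add_le hs) (hF f) (hF g)
  simp only [Pi.mul_apply, enorm_eq_self]
  gcongr
  exact enorm_convolution_mul_le _ _ ξ

lemma gradENorm_pow_mul_le [Nontrivial E] {s : ℝ} (hs : 0 ≤ s) (f g : 𝓢(E, ℂ)) (n : ℕ) :
    gradENorm s (fun x => f x ^ n * g x)
      ≤ (gradAlgebraConst E s * gradENorm s f) ^ n * gradENorm s g := by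
  induction n with
  | zero => simp
  | succ n ih =>
    have hmul := gradENorm_mul_le hs f ((pairing (ContinuousLinearMap.mul ℂ ℂ) f ^ n) g)
    simp only [coe_pairing_mul_pow] at hmul
    calc gradENorm s (fun x => f x ^ (n + 1) * g x)
        = gradENorm s (fun x => f x * (f x ^ n * g x)) := by simp only [pow_succ', mul_assoc]
      _ ≤ gradAlgebraConst E s * gradENorm s f * gradENorm s (fun x => f x ^ n * g x) := hmul
      _ ≤ (gradAlgebraConst E s * gradENorm s f) ^ (n + 1) * gradENorm s g := by
          rw [pow_succ', mul_assoc _ (_ ^ n)]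
          gcongr

open scoped Nat in
lemma hasSum_fourier_pow_mul {f g : E → ℂ} {B : ℝ} (hf : AEStronglyMeasurable f)
    (hB : ∀ x, ‖f x‖ ≤ B) (hg : Integrable g) (ξ : E) :
    HasSum (fun n : ℕ => 𝓕 (fun x => (n ! : ℂ)⁻¹ * (f x ^ n * g x)) ξ)
      (𝓕 (fun x => Complex.exp (f x) * g x) ξ) := by
  have hexp (x : E) : HasSum (fun n : ℕ => B ^ n / n ! * ‖g x‖) (Real.exp B * ‖g x‖) := by
    rw [Real.exp_eq_exp_ℝ]
    exact (NormedSpace.expSeries_div_hasSum_exp B).mul_right _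
  simp only [Real.fourier_eq]
  refine hasSum_integral_of_dominated_convergence (fun n x => B ^ n / n ! * ‖g x‖) (fun n => ?_)
    (fun n => .of_forall fun x => ?_) (.of_forall fun x => (hexp x).summable) ?_
    (.of_forall fun x => ?_)
  · have hchar : Continuous fun x : E => Real.fourierChar (-inner ℝ x ξ) := by
      have := Real.continuous_fourierChar
      fun_prop
    exact hchar.aestronglyMeasurable.smul (((hf.pow n).mul hg.1).const_mul _)
  · rw [Circle.norm_smul, norm_mul, norm_mul, norm_inv, norm_pow, Complex.norm_natCast,
      ← mul_assoc, ← div_eq_inv_mul]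
    gcongr
    exact hB x
  · simpa only [(hexp _).tsum_eq] using hg.norm.const_mul (Real.exp B)
  · have hf := (NormedSpace.expSeries_div_hasSum_exp (f x)).mul_right (g x)
    rw [← Complex.exp_eq_exp_ℂ] at hf
    simpa only [div_eq_inv_mul, mul_assoc] using hf.const_smul (Real.fourierChar (-inner ℝ x ξ))

open scoped Nat in
theorem gradENorm_exp_mul_le [Nontrivial E] {s : ℝ} (hs : 0 ≤ s) (f g : 𝓢(E, ℂ))
    (hconst : gradAlgebraConst E s * gradENorm s f ≠ ∞) :
    gradENorm s (fun x => Complex.exp (f x) * g x)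
      ≤ ENNReal.ofReal (Real.exp (gradAlgebraConst E s * gradENorm s f).toReal)
        * gradENorm s g := by
  have hterm (n : ℕ) : ⇑((n ! : ℂ)⁻¹ • (pairing (ContinuousLinearMap.mul ℂ ℂ) f ^ n) g)
      = fun x => (n ! : ℂ)⁻¹ * (f x ^ n * g x) := by
    ext x
    rw [smul_apply, coe_pairing_mul_pow, smul_eq_mul]
  have hmeas (n : ℕ) : AEStronglyMeasurable
      (fun ξ => gradWeight s ξ • 𝓕 (fun x => (n ! : ℂ)⁻¹ * (f x ^ n * g x)) ξ) := by
    rw [← hterm]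
    exact ((continuous_gradWeight s).smul
      (continuous_fourier (SchwartzMap.integrable _))).aestronglyMeasurable
  have hsum (ξ : E) := (hasSum_fourier_pow_mul f.continuous.aestronglyMeasurable
    (SchwartzMap.norm_le_seminorm ℝ f) g.integrable ξ).const_smul (gradWeight s ξ)
  calc gradENorm s (fun x => Complex.exp (f x) * g x)
      ≤ ∑' n : ℕ, gradENorm s (fun x => (n ! : ℂ)⁻¹ * (f x ^ n * g x)) :=
        eLpNorm_le_tsum_of_hasSum one_le_two hmeas (.of_forall hsum)
    _ ≤ ∑' n : ℕ, (n ! : ℝ≥0∞)⁻¹ * (gradAlgebraConst E s * gradENorm s f) ^ n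
          * gradENorm s g := by
        gcongr with n
        rw [gradENorm_const_mul, enorm_inv (by exact_mod_cast n.factorial_ne_zero),
          ← ofReal_norm, Complex.norm_natCast, ENNReal.ofReal_natCast, mul_assoc]
        gcongr
        exact gradENorm_pow_mul_le hs f g n
    _ = ENNReal.ofReal (Real.exp (gradAlgebraConst E s * gradENorm s f).toReal)
          * gradENorm s g := by
        rw [ENNReal.tsum_mul_right, tsum_inv_factorial_mul_pow hconst]

end GradENorm

lemma toReal_eLpNorm_two_eq_sqrt {α F : Type*} [MeasurableSpace α] {μ : Measure α}
    [NormedAddCommGroup F] {f : α → F} (hf : AEStronglyMeasurable f μ) :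
    (eLpNorm f 2 μ).toReal = √(∫ x, ‖f x‖ ^ 2 ∂μ) := by
  rw [toReal_eLpNorm hf, lpNorm_eq_integral_norm_rpow_toReal two_ne_zero ENNReal.ofNat_ne_top hf,
    Real.sqrt_eq_rpow]
  simp

open scoped Nat in
lemma hasTemperateGrowth_comp_schwartzMap {E F G : Type*} [NormedAddCommGroup E] [NormedSpace ℝ E]
    [NormedAddCommGroup F] [NormedSpace ℝ F] [ProperSpace F] [NormedAddCommGroup G]
    [NormedSpace ℝ G] {g : F → G} (hg : ContDiff ℝ ((⊤ : ℕ∞) : WithTop ℕ∞) g) (f : 𝓢(E, F)) :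
    (fun x => g (f x)).HasTemperateGrowth := by
  refine ⟨hg.comp f.smooth', fun n => ?_⟩
  have hbound (i : ℕ) : ∃ C, ∀ y ∈ Metric.closedBall (0 : F) (SchwartzMap.seminorm ℝ 0 0 f),
      ‖iteratedFDeriv ℝ i g y‖ ≤ C :=
    (isCompact_closedBall _ _).exists_bound_of_continuousOn
      (hg.continuous_iteratedFDeriv (by exact_mod_cast le_top)).continuousOn
  choose C hC using hbound
  set D : ℝ := 1 + ∑ i ∈ Finset.range (n + 1), SchwartzMap.seminorm ℝ 0 i f
  have one_le_D : 1 ≤ D := le_add_of_nonneg_right (Finset.sum_nonneg fun i _ => apply_nonneg _ _)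
  have seminorm_le_D {i : ℕ} (hi : i ≤ n) : SchwartzMap.seminorm ℝ 0 i f ≤ D :=
    (Finset.single_le_sum (f := fun i => SchwartzMap.seminorm ℝ 0 i f)
      (fun i _ => apply_nonneg _ _) (Finset.mem_range_succ_iff.2 hi)).trans
      (le_add_of_nonneg_left zero_le_one)
  refine ⟨0, n ! * (∑ i ∈ Finset.range (n + 1), |C i|) * D ^ n, fun x => ?_⟩
  rw [pow_zero, mul_one]
  refine norm_iteratedFDeriv_comp_le hg f.smooth' (by exact_mod_cast le_top) x
    (fun i hi => ?_) (fun i hi₁ hi => ?_)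
  · calc ‖iteratedFDeriv ℝ i g (f x)‖ ≤ |C i| :=
          (hC i _ (mem_closedBall_zero_iff.2 (SchwartzMap.norm_le_seminorm ℝ f x))).trans
            (le_abs_self _)
      _ ≤ ∑ i ∈ Finset.range (n + 1), |C i| :=
          Finset.single_le_sum (f := fun i => |C i|) (fun i _ => abs_nonneg _)
            (Finset.mem_range_succ_iff.2 hi)
  · calc ‖iteratedFDeriv ℝ i f x‖ ≤ SchwartzMap.seminorm ℝ 0 i f :=
          SchwartzMap.norm_iteratedFDeriv_le_seminorm ℝ f i x
      _ ≤ D := seminorm_le_D hi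
      _ ≤ D ^ i := le_self_pow₀ one_le_D (by omega)

lemma coe_smulLeftCLM_exp {E : Type*} [NormedAddCommGroup E] [NormedSpace ℝ E] (f g : 𝓢(E, ℂ)) :
    ⇑(smulLeftCLM ℂ (fun x => Complex.exp (f x)) g) = fun x => Complex.exp (f x) * g x :=
  smulLeftCLM_apply (hasTemperateGrowth_comp_schwartzMap Complex.contDiff_exp f) g

lemma norm_rpow_smul_sq {E F : Type*} [NormedAddCommGroup E] [NormedAddCommGroup F]
    [NormedSpace ℝ F] (s : ℝ) (ξ : E) (z : F) :
    ‖(1 + ‖ξ‖ ^ 2) ^ (s / 2) • z‖ ^ 2 = (1 + ‖ξ‖ ^ 2) ^ s * ‖z‖ ^ 2 := by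
  rw [norm_smul, Real.norm_of_nonneg (by positivity), mul_pow, rpow_div_two_sq (by positivity)]

section Bracket

variable {E : Type*} [NormedAddCommGroup E] [InnerProductSpace ℝ E] [FiniteDimensional ℝ E]
  [MeasurableSpace E] [BorelSpace E]

lemma memLp_two_rpow_smul_fourier (r : ℝ) (u : 𝓢(E, ℂ)) :
    MemLp (fun ξ : E => (1 + ‖ξ‖ ^ 2) ^ r • 𝓕 (u : E → ℂ) ξ) 2 := by
  have hmem := (smulLeftCLM ℂ (fun ξ : E => (1 + ‖ξ‖ ^ 2) ^ r) (𝓕 u)).memLp 2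
  rwa [smulLeftCLM_apply (Function.hasTemperateGrowth_one_add_norm_sq_rpow E r),
    SchwartzMap.fourier_coe] at hmem

lemma integrable_rpow_mul_norm_fourier_sq (s : ℝ) (u : 𝓢(E, ℂ)) :
    Integrable (fun ξ : E => (1 + ‖ξ‖ ^ 2) ^ s * ‖𝓕 (u : E → ℂ) ξ‖ ^ 2) := by
  simpa only [norm_rpow_smul_sq] using
    (memLp_two_iff_integrable_sq_norm (memLp_two_rpow_smul_fourier _ u).1).1
      (memLp_two_rpow_smul_fourier (s / 2) u)

lemma gradENorm_le_eLpNorm_rpow_smul_fourier (s : ℝ) (u : E → ℂ) :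
    gradENorm s u ≤ eLpNorm (fun ξ : E => (1 + ‖ξ‖ ^ 2) ^ ((s + 1) / 2) • 𝓕 u ξ) 2 := by
  refine eLpNorm_mono fun ξ => ?_
  rw [norm_smul, norm_smul, Real.norm_of_nonneg (gradWeight_nonneg s ξ),
    Real.norm_of_nonneg (by positivity)]
  gcongr
  exact gradWeight_le_one_add_norm_sq_rpow s ξ

lemma gradENorm_ne_top (s : ℝ) (u : 𝓢(E, ℂ)) : gradENorm s u ≠ ∞ :=
  ne_top_of_le_ne_top (memLp_two_rpow_smul_fourier ((s + 1) / 2) u).eLpNorm_ne_top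
    (gradENorm_le_eLpNorm_rpow_smul_fourier s u)

end Bracket

section Euc

variable {d : ℕ}

lemma hNorm_eq_toReal_eLpNorm (s : ℝ) (u : 𝓢(Euc d, ℂ)) :
    hNorm d s u = (eLpNorm (fun ξ : Euc d => (1 + ‖ξ‖ ^ 2) ^ (s / 2) • 𝓕 (u : Euc d → ℂ) ξ)
      2).toReal := by
  rw [toReal_eLpNorm_two_eq_sqrt (memLp_two_rpow_smul_fourier _ u).1]
  simp only [norm_rpow_smul_sq, hNorm, hNormSq]

lemma hNorm_neg (s : ℝ) (u : 𝓢(Euc d, ℂ)) : hNorm d s ⇑(-u) = hNorm d s u := by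
  have hfourier (ξ : Euc d) : ‖𝓕 (⇑(-u)) ξ‖ = ‖𝓕 (u : Euc d → ℂ) ξ‖ := by
    rw [← SchwartzMap.fourier_coe, ← SchwartzMap.fourier_coe, FourierTransform.fourier_neg,
      neg_apply, norm_neg]
  simp only [hNorm, hNormSq, hfourier]

lemma norm_fourier_pd_sq (i : Fin d) (u : 𝓢(Euc d, ℂ)) (ξ : Euc d) :
    ‖𝓕 (pd d i u) ξ‖ ^ 2 = (2 * π) ^ 2 * ξ i ^ 2 * ‖𝓕 (u : Euc d → ℂ) ξ‖ ^ 2 := by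
  have hpd : 𝓕 (pd d i u) ξ = (2 * π * Complex.I) • (ξ i • 𝓕 (u : Euc d → ℂ) ξ) := by
    change 𝓕 (LineDeriv.lineDerivOp (EuclideanSpace.single i (1 : ℝ)) u : Euc d → ℂ) ξ = _
    rw [← SchwartzMap.fourier_coe, SchwartzMap.fourier_lineDerivOp_eq, smul_apply,
      smulLeftCLM_apply_apply (by fun_prop), SchwartzMap.fourier_coe,
      EuclideanSpace.inner_single_right]
    simp
  rw [hpd, norm_smul, norm_smul, mul_pow, mul_pow, Real.norm_eq_abs, sq_abs]
  simp [abs_of_pos Real.pi_pos, mul_assoc]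

lemma gradHNorm_eq_gradENorm (s : ℝ) (u : 𝓢(Euc d, ℂ)) :
    gradHNorm d s u = 2 * π * (gradENorm s u).toReal := by
  have hsum (ξ : Euc d) : ∑ i, (1 + ‖ξ‖ ^ 2) ^ s * ‖𝓕 (pd d i u) ξ‖ ^ 2
      = (2 * π) ^ 2 * ‖gradWeight s ξ • 𝓕 (u : Euc d → ℂ) ξ‖ ^ 2 := by
    simp only [norm_fourier_pd_sq, ← Finset.mul_sum, ← Finset.sum_mul]
    rw [norm_smul, mul_pow ‖gradWeight s ξ‖, Real.norm_of_nonneg (gradWeight_nonneg s ξ),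
      gradWeight_sq, ← EuclideanSpace.real_norm_sq_eq]
    ring
  have hint (i : Fin d) : Integrable fun ξ => (1 + ‖ξ‖ ^ 2) ^ s * ‖𝓕 (pd d i u) ξ‖ ^ 2 :=
    integrable_rpow_mul_norm_fourier_sq s
      (LineDeriv.lineDerivOp (EuclideanSpace.single i (1 : ℝ)) u)
  have hmeas : AEStronglyMeasurable fun ξ => gradWeight s ξ • 𝓕 (u : Euc d → ℂ) ξ :=
    ((continuous_gradWeight s).smul (continuous_fourier u.integrable)).aestronglyMeasurable
  rw [gradENorm, toReal_eLpNorm_two_eq_sqrt hmeas, gradHNorm]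
  simp only [hNormSq]
  rw [← integral_finsetSum _ fun i _ => hint i]
  simp only [hsum, integral_const_mul]
  rw [Real.sqrt_mul (by positivity), Real.sqrt_sq (by positivity)]

lemma toReal_gradENorm_le_hNorm (s : ℝ) (u : 𝓢(Euc d, ℂ)) :
    (gradENorm s u).toReal ≤ hNorm d (s + 1) u := by
  rw [hNorm_eq_toReal_eLpNorm]
  exact ENNReal.toReal_mono (memLp_two_rpow_smul_fourier _ u).eLpNorm_ne_top
    (gradENorm_le_eLpNorm_rpow_smul_fourier s u)

theorem gradHNorm_exp_mul_le {s : ℝ} (hd : 3 ≤ d) (hs : (d : ℝ) / 2 < s + 1) (f g : 𝓢(Euc d, ℂ)) :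
    gradHNorm d s (fun x => Complex.exp (f x) * g x)
      ≤ Real.exp ((gradAlgebraConst (Euc d) s).toReal * hNorm d (s + 1) f)
        * gradHNorm d s g := by
  have hd' : (3 : ℝ) ≤ d := by exact_mod_cast hd
  have hrank : Module.finrank ℝ (Euc d) = d := finrank_euclideanSpace_fin
  have : Nontrivial (Euc d) := Module.nontrivial_of_finrank_pos (R := ℝ) (by omega)
  have hconst : gradAlgebraConst (Euc d) s ≠ ∞ :=
    gradAlgebraConst_ne_top (by rwa [hrank]) (by rwa [hrank])
  have hexp := gradENorm_exp_mul_le (by linarith) f g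
    (ENNReal.mul_ne_top hconst (gradENorm_ne_top s f))
  rw [← coe_smulLeftCLM_exp, gradHNorm_eq_gradENorm, gradHNorm_eq_gradENorm, coe_smulLeftCLM_exp,
    mul_left_comm]
  gcongr
  calc (gradENorm s fun x => Complex.exp (f x) * g x).toReal
      ≤ Real.exp (gradAlgebraConst (Euc d) s * gradENorm s f).toReal * (gradENorm s g).toReal := by
        simpa [ENNReal.toReal_mul, Real.exp_nonneg] using ENNReal.toReal_mono
          (ENNReal.mul_ne_top ENNReal.ofReal_ne_top (gradENorm_ne_top s g)) hexp
    _ ≤ Real.exp ((gradAlgebraConst (Euc d) s).toReal * hNorm d (s + 1) f)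
          * (gradENorm s g).toReal := by
        rw [ENNReal.toReal_mul]
        gcongr
        exact toReal_gradENorm_le_hNorm s f

lemma hNormSq_nonneg (s : ℝ) (u : Euc d → ℂ) : 0 ≤ hNormSq d s u :=
  integral_nonneg fun ξ => by positivity

lemma gradHNorm_sq (s : ℝ) (u : Euc d → ℂ) :
    gradHNorm d s u ^ 2 = ∑ i, hNormSq d s (pd d i u) :=
  Real.sq_sqrt (Finset.sum_nonneg fun _ _ => hNormSq_nonneg s _)

lemma sqrt_sum_sum_hNormSq_eq {ι : Type*} [Fintype ι] (s : ℝ) (w : ι → Euc d → ℂ) :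
    √(∑ i, ∑ j, hNormSq d s (pd d i (w j))) = √(∑ j, gradHNorm d s (w j) ^ 2) := by
  rw [Finset.sum_comm]
  simp only [gradHNorm_sq]

theorem statement9_general {ι : Type*} [Fintype ι] {s : ℝ} (hd : 3 ≤ d)
    (hs : (d : ℝ) / 2 < s + 1) (φ : 𝓢(Euc d, ℂ)) (w : ι → 𝓢(Euc d, ℂ)) :
    √(∑ i, ∑ j, hNormSq d s (pd d i (fun y => Complex.exp (-φ y) * w j y)))
      ≤ Real.exp ((gradAlgebraConst (Euc d) s).toReal * hNorm d (s + 1) φ)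
        * √(∑ i, ∑ j, hNormSq d s (pd d i (w j))) := by
  rw [sqrt_sum_sum_hNormSq_eq, sqrt_sum_sum_hNormSq_eq, ← hNorm_neg,
    ← Real.sqrt_sq (Real.exp_pos _).le, ← Real.sqrt_mul (sq_nonneg _), Finset.mul_sum]
  gcongr with j
  rw [← mul_pow]
  gcongr
  · exact Real.sqrt_nonneg _
  · exact gradHNorm_exp_mul_le hd hs (-φ) (w j)

end Euc

/-- `‖∇(e^{-φ} w)‖_{H^s} ≤ 𝒞(‖φ‖_{H^{s+1}}) ‖∇w‖_{H^s}`. -/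
theorem statement9 (d s : ℕ) (hd : 3 ≤ d) (hs : (d : ℝ) / 2 < s) :
    ∃ C : ℝ → ℝ, ∀ (φ : 𝓢(Euc d, ℝ)) (w : Fin d → 𝓢(Euc d, ℂ)),
      Real.sqrt (∑ i, ∑ j, hNormSq d s
          (pd d i (fun y => Complex.exp (-(φ y : ℂ)) * w j y)))
        ≤ C (hNorm d ((s : ℝ) + 1) (fun x => (φ x : ℂ))) *
          Real.sqrt (∑ i, ∑ j, hNormSq d s (pd d i (w j))) :=
  ⟨fun h => Real.exp ((gradAlgebraConst (Euc d) s).toReal * h), fun φ w =>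
    statement9_general hd (by linarith) (φ.postcompCLM Complex.ofRealCLM) w⟩
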